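/- Temporal weak BV estimate: in the discrete upwind setting with N time steps, let q ∈ (1,∞), κ > 1, δ > 0, set T := Nδ, λⁿ := δ · max_K ((div uⁿ)_K)⁻ and Λ := exp(Σ_n λⁿ), and assume ((q−1)/q) λⁿ ≤ (κ−1)/κ for every n. Let ρ⁰, f⁰,…,f^{N−1} ∈ ℝ^𝒯 be arbitrary (not necessarily nonnegative) and let ρⁿ⁺¹ solve one step of the implicit upwind scheme with data ρⁿ, fⁿ, fluxes uⁿ and time step δ for each n. Then there exists a constant C, depending only on q, κ, Λ, Σ_K |K|, ‖ρ⁰‖_{ℓ^q} and Σ_n δ‖fⁿ‖_{ℓ^q}, such that Σ_{n=0}^{N−1} Σ_{K∈𝒯} |K| |ρⁿ⁺¹_K − ρⁿ_K| ≤ C √(T/δ). -/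

import Mathlib

open Finset

/-!
Testing one step of the scheme against `|ρⁿ⁺¹|^(r-2) ρⁿ⁺¹` and summing by parts gives, for every
exponent `r > 1`, an energy inequality in which the upwind transport term only contributes
`(r - 1) λⁿ ‖ρⁿ⁺¹‖^r`. With `r = q`, Hölder and discrete Grönwall bound `‖ρⁿ‖_q` uniformly in `n`.

With `r = min q 2`, the same inequality controls the sum over `n` of the Bregman divergences of
`|·|^r` between `ρⁿ` and `ρⁿ⁺¹`. As `r ≤ 2`, the divergence of `a` and `b` dominates
`(a - b)²` up to the weight `1 + |a|^r + |b|^r`, so Cauchy–Schwarz over all times and cells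
finishes the proof; the weights contribute a factor of order `N = T / δ`.
-/

section StrongConvexity

variable {s : Set ℝ} {m : ℝ} {f : ℝ → ℝ}

lemma hasDerivAt_sub_half_mul_norm_sq {f' x : ℝ} (m : ℝ) (hf : HasDerivAt f f' x) :
    HasDerivAt (fun y ↦ f y - m / 2 * ‖y‖ ^ 2) (f' - m * x) x := by
  simp only [Real.norm_eq_abs, sq_abs]
  exact (hf.sub ((hasDerivAt_pow 2 x).const_mul (m / 2))).congr_deriv (by norm_num; ring)

lemma strongConvexOn_of_monotoneOn_deriv_sub {f' : ℝ → ℝ} (hs : Convex ℝ s)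
    (hf : ∀ x ∈ s, HasDerivAt f (f' x) x) (hmono : MonotoneOn (fun x ↦ f' x - m * x) s) :
    StrongConvexOn s m f := by
  have hderiv (x) (hx : x ∈ s) := hasDerivAt_sub_half_mul_norm_sq m (hf x hx)
  rw [strongConvexOn_iff_convex]
  refine MonotoneOn.convexOn_of_deriv hs (fun x hx ↦ (hderiv x hx).continuousAt.continuousWithinAt)
    (fun x hx ↦ (hderiv x (interior_subset hx)).differentiableAt.differentiableWithinAt) ?_
  exact (hmono.mono interior_subset).congr fun x hx ↦ ((hderiv x (interior_subset hx)).deriv).symm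

lemma tangent_add_half_mul_sq_le_of_strongConvexOn {a b f' : ℝ} (hf : StrongConvexOn s m f)
    (ha : a ∈ s) (hb : b ∈ s) (hd : HasDerivAt f f' b) :
    f b + f' * (a - b) + m / 2 * (a - b) ^ 2 ≤ f a := by
  have hconv := strongConvexOn_iff_convex.mp hf
  have hd' := hasDerivAt_sub_half_mul_norm_sq m hd
  simp only [Real.norm_eq_abs, sq_abs] at hconv hd'
  rcases lt_trichotomy a b with hab | rfl | hab
  · have hslope := hconv.slope_le_of_hasDerivAt ha hb hab hd'
    rw [slope_def_field, div_le_iff₀ (sub_pos.2 hab)] at hslope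
    linarith
  · simp
  · have hslope := hconv.le_slope_of_hasDerivAt hb ha hab hd'
    rw [slope_def_field, le_div_iff₀ (sub_pos.2 hab)] at hslope
    linarith

end StrongConvexity

section DualityMap

variable {r : ℝ}

/-- The `ℓ^r` duality map `x ↦ |x|^(r-2) x` on `ℝ`, that is, the derivative of `|x|^r / r`; the
scheme is tested against it. At `x = 0` its value is `0`, whatever `0 ^ (r - 2)` is. -/
noncomputable def dualityMap (r x : ℝ) : ℝ := |x| ^ (r - 2) * x

/-- The Bregman divergence of `|·|^r`: the gap at `a` between `|·|^r` and its tangent at `b`. -/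
noncomputable def powBregman (r a b : ℝ) : ℝ := |a| ^ r - |b| ^ r - r * dualityMap r b * (a - b)

lemma dualityMap_zero (r : ℝ) : dualityMap r 0 = 0 := mul_zero _

lemma dualityMap_neg (r x : ℝ) : dualityMap r (-x) = -dualityMap r x := by
  simp [dualityMap]

lemma abs_dualityMap (hr : r ≠ 1) (x : ℝ) : |dualityMap r x| = |x| ^ (r - 1) := by
  rcases eq_or_ne x 0 with rfl | hx
  · simp [dualityMap, Real.zero_rpow (sub_ne_zero.2 hr)]
  · rw [dualityMap, abs_mul, Real.abs_rpow_of_nonneg (abs_nonneg x), abs_abs,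
      ← Real.rpow_add_one (abs_ne_zero.2 hx)]
    ring_nf

lemma dualityMap_of_nonneg (hr : r ≠ 1) {x : ℝ} (hx : 0 ≤ x) : dualityMap r x = x ^ (r - 1) := by
  rw [← abs_of_nonneg (show 0 ≤ dualityMap r x by unfold dualityMap; positivity),
    abs_dualityMap hr, abs_of_nonneg hx]

lemma mul_dualityMap (hr : r ≠ 0) (x : ℝ) : x * dualityMap r x = |x| ^ r := by
  rcases eq_or_ne x 0 with rfl | hx
  · simp [Real.zero_rpow hr]
  · rw [dualityMap, mul_left_comm, ← sq, ← sq_abs, ← Real.rpow_natCast,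
      ← Real.rpow_add (abs_pos.2 hx)]
    norm_num

lemma powBregman_nonneg (hr : 1 < r) (a b : ℝ) : 0 ≤ powBregman r a b := by
  have hconj := Real.HolderConjugate.conjExponent hr
  have hyoung := Real.young_inequality a (dualityMap r b) hconj
  have hpow : (|b| ^ (r - 1)) ^ (r / (r - 1)) = |b| ^ r := by
    rw [← Real.rpow_mul (abs_nonneg b), mul_div_cancel₀ r (sub_pos.2 hr).ne']
  rw [abs_dualityMap hr.ne', Real.conjExponent, hpow] at hyoung
  have hmul := mul_le_mul_of_nonneg_left hyoung (zero_lt_one.trans hr).le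
  have hcancel : r * (|a| ^ r / r + |b| ^ r / (r / (r - 1))) = |a| ^ r + (r - 1) * |b| ^ r := by
    field_simp
  rw [powBregman, ← mul_dualityMap (zero_lt_one.trans hr).ne' b] at *
  linarith

lemma mul_sub_le_rpow_sub_rpow {p x y : ℝ} (hp₀ : 0 ≤ p) (hp₁ : p ≤ 1) (hx : 0 ≤ x) (hy : 0 < y) :
    p * y ^ (p - 1) * (y - x) ≤ y ^ p - x ^ p := by
  have hbernoulli : (x / y) ^ p ≤ 1 + p * (x / y - 1) := by
    have hle : -1 ≤ x / y - 1 := by linarith [div_nonneg hx hy.le]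
    simpa using rpow_one_add_le_one_add_mul_self hle hp₀ hp₁
  rw [Real.div_rpow hx hy.le, div_le_iff₀ (Real.rpow_pos_of_pos hy p)] at hbernoulli
  have hscale : (1 + p * (x / y - 1)) * y ^ p = y ^ p - p * y ^ (p - 1) * (y - x) := by
    rw [Real.rpow_sub_one hy.ne']
    field_simp
    ring
  linarith

lemma monotoneOn_dualityMap_sub (hr₁ : 1 < r) (hr₂ : r ≤ 2) (M : ℝ) :
    MonotoneOn (fun x ↦ dualityMap r x - (r - 1) * M ^ (r - 2) * x) (Set.Icc (-M) M) := by
  have hnonneg {x y : ℝ} (hx : 0 ≤ x) (hxy : x ≤ y) (hy : y ≤ M) :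
      (r - 1) * M ^ (r - 2) * (y - x) ≤ dualityMap r y - dualityMap r x := by
    rcases (hx.trans hxy).eq_or_lt with rfl | hy₀
    · simp [le_antisymm hxy hx]
    · have hrpow : M ^ (r - 2) ≤ y ^ (r - 2) :=
        Real.rpow_le_rpow_of_nonpos hy₀ hy (by linarith)
      rw [dualityMap_of_nonneg hr₁.ne' hy₀.le, dualityMap_of_nonneg hr₁.ne' hx]
      calc (r - 1) * M ^ (r - 2) * (y - x)
        _ ≤ (r - 1) * y ^ (r - 1 - 1) * (y - x) := by
          rw [show r - 1 - 1 = r - 2 by ring]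
          gcongr
        _ ≤ y ^ (r - 1) - x ^ (r - 1) :=
          mul_sub_le_rpow_sub_rpow (by linarith) (by linarith) hx hy₀
  rintro x ⟨hxM, -⟩ y ⟨-, hyM⟩ hxy
  dsimp only
  rcases le_total 0 x with hx | hx
  · linarith [hnonneg hx hxy hyM]
  rcases le_total 0 y with hy | hy
  · have hpos := hnonneg le_rfl hy hyM
    have hneg := hnonneg le_rfl (neg_nonneg.2 hx) (neg_le.1 hxM)
    rw [dualityMap_neg] at hneg
    rw [dualityMap_zero] at hpos hneg
    linarith
  · have hneg := hnonneg (neg_nonneg.2 hy) (neg_le_neg hxy) (neg_le.1 hxM)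
    rw [dualityMap_neg, dualityMap_neg] at hneg
    linarith

lemma strongConvexOn_abs_rpow (hr₁ : 1 < r) (hr₂ : r ≤ 2) (M : ℝ) :
    StrongConvexOn (Set.Icc (-M) M) (r * (r - 1) * M ^ (r - 2)) fun x ↦ |x| ^ r := by
  refine strongConvexOn_of_monotoneOn_deriv_sub (convex_Icc _ _)
    (fun x _ ↦ hasDerivAt_abs_rpow x hr₁) fun x hx y hy hxy ↦ ?_
  have hmono := mul_le_mul_of_nonneg_left (monotoneOn_dualityMap_sub hr₁ hr₂ M hx hy hxy)
    (zero_lt_one.trans hr₁).le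
  simp only [dualityMap] at hmono
  linarith

lemma mul_sq_sub_le_powBregman (hr₁ : 1 < r) (hr₂ : r ≤ 2) {a b M : ℝ} (ha : |a| ≤ M)
    (hb : |b| ≤ M) : r * (r - 1) / 2 * M ^ (r - 2) * (a - b) ^ 2 ≤ powBregman r a b := by
  have htangent := tangent_add_half_mul_sq_le_of_strongConvexOn (strongConvexOn_abs_rpow hr₁ hr₂ M)
    (abs_le.1 ha) (abs_le.1 hb) (hasDerivAt_abs_rpow b hr₁)
  rw [powBregman, dualityMap]
  linarith

lemma rpow_le_one_add_rpow {x p q : ℝ} (hx : 0 ≤ x) (hp : 0 ≤ p) (hpq : p ≤ q) :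
    x ^ p ≤ 1 + x ^ q := by
  rcases le_total x 1 with h | h
  · linarith [Real.rpow_le_one hx h hp, Real.rpow_nonneg hx q]
  · linarith [Real.rpow_le_rpow_of_exponent_le h hpq]

lemma mul_sq_sub_le_mul_powBregman (hr₁ : 1 < r) (hr₂ : r ≤ 2) (a b : ℝ) :
    r * (r - 1) / 2 * (a - b) ^ 2 ≤ (1 + |a| ^ r + |b| ^ r) * powBregman r a b := by
  rcases eq_or_ne a b with rfl | hab
  · have : 0 ≤ powBregman r a a := powBregman_nonneg hr₁ a a
    rw [sub_self, zero_pow two_ne_zero, mul_zero]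
    positivity
  set M := max |a| |b|
  have hM : 0 < M := by
    rcases ne_or_eq a 0 with ha | rfl
    · exact lt_max_of_lt_left (abs_pos.2 ha)
    · exact lt_max_of_lt_right (abs_pos.2 hab.symm)
  have hweight : M ^ (2 - r) ≤ 1 + |a| ^ r + |b| ^ r := by
    have hMr : M ^ r ≤ |a| ^ r + |b| ^ r := by
      rcases max_choice |a| |b| with h | h <;> simp only [M, h] <;>
        linarith [Real.rpow_nonneg (abs_nonneg a) r, Real.rpow_nonneg (abs_nonneg b) r]
    linarith [rpow_le_one_add_rpow hM.le (show 0 ≤ 2 - r by linarith) (show 2 - r ≤ r by linarith)]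
  calc r * (r - 1) / 2 * (a - b) ^ 2
    _ = M ^ (2 - r) * (r * (r - 1) / 2 * M ^ (r - 2) * (a - b) ^ 2) := by
      have hcancel : M ^ (2 - r) * M ^ (r - 2) = 1 := by
        rw [← Real.rpow_add hM, sub_add_sub_cancel, sub_self, Real.rpow_zero]
      linear_combination -(r * (r - 1) / 2 * (a - b) ^ 2) * hcancel
    _ ≤ M ^ (2 - r) * powBregman r a b := by
      gcongr
      exact mul_sq_sub_le_powBregman hr₁ hr₂ (le_max_left _ _) (le_max_right _ _)
    _ ≤ (1 + |a| ^ r + |b| ^ r) * powBregman r a b :=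
      mul_le_mul_of_nonneg_right hweight (powBregman_nonneg hr₁ a b)

end DualityMap

section CellNorm

variable {ι : Type*} [Fintype ι] {w : ι → ℝ}

/-- The `ℓ^r` norm of a cell-wise constant function, `w` being the volumes of the cells. -/
noncomputable def cellNorm (w : ι → ℝ) (r : ℝ) (v : ι → ℝ) : ℝ := (∑ K, w K * |v K| ^ r) ^ (1 / r)

lemma sum_mul_abs_rpow_nonneg (hw : ∀ K, 0 ≤ w K) (r : ℝ) (v : ι → ℝ) :
    0 ≤ ∑ K, w K * |v K| ^ r :=
  sum_nonneg fun K _ ↦ mul_nonneg (hw K) (Real.rpow_nonneg (abs_nonneg _) r)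

lemma cellNorm_nonneg (hw : ∀ K, 0 ≤ w K) (r : ℝ) (v : ι → ℝ) : 0 ≤ cellNorm w r v :=
  Real.rpow_nonneg (sum_mul_abs_rpow_nonneg hw r v) _

lemma cellNorm_rpow (hw : ∀ K, 0 ≤ w K) (r s : ℝ) (v : ι → ℝ) :
    cellNorm w r v ^ s = (∑ K, w K * |v K| ^ r) ^ (s / r) := by
  rw [cellNorm, ← Real.rpow_mul (sum_mul_abs_rpow_nonneg hw r v), one_div_mul_eq_div]

lemma cellNorm_rpow_self (hw : ∀ K, 0 ≤ w K) {r : ℝ} (hr : r ≠ 0) (v : ι → ℝ) :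
    cellNorm w r v ^ r = ∑ K, w K * |v K| ^ r := by
  rw [cellNorm_rpow hw, div_self hr, Real.rpow_one]

lemma sum_mul_mul_le_cellNorm_mul_cellNorm (hw : ∀ K, 0 ≤ w K) {p q : ℝ}
    (hpq : p.HolderConjugate q) (v b : ι → ℝ) :
    ∑ K, w K * (v K * b K) ≤ cellNorm w p v * cellNorm w q b := by
  have hweight {s : ℝ} (hs : s ≠ 0) (x : ι → ℝ) (K : ι) :
      |w K ^ (1 / s) * x K| ^ s = w K * |x K| ^ s := by
    rw [abs_mul, Real.mul_rpow (abs_nonneg _) (abs_nonneg _),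
      abs_of_nonneg (Real.rpow_nonneg (hw K) _), ← Real.rpow_mul (hw K), one_div_mul_cancel hs,
      Real.rpow_one]
  have hsplit (K : ι) : w K ^ (1 / p) * v K * (w K ^ (1 / q) * b K) = w K * (v K * b K) := by
    rw [mul_mul_mul_comm, ← Real.rpow_add_of_nonneg (hw K) hpq.one_div_nonneg
      hpq.symm.one_div_nonneg, hpq.one_div_add_one_div, div_one, Real.rpow_one]
  have hholder := Real.inner_le_Lp_mul_Lq univ (fun K ↦ w K ^ (1 / p) * v K)
    (fun K ↦ w K ^ (1 / q) * b K) hpq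
  simpa only [cellNorm, hweight hpq.ne_zero, hweight hpq.symm.ne_zero, hsplit] using hholder

lemma cellNorm_conjExponent_dualityMap (hw : ∀ K, 0 ≤ w K) {r : ℝ} (hr : 1 < r) (b : ι → ℝ) :
    cellNorm w r.conjExponent (fun K ↦ dualityMap r (b K)) = cellNorm w r b ^ (r - 1) := by
  have hr₁ : r - 1 ≠ 0 := (sub_pos.2 hr).ne'
  rw [cellNorm_rpow hw, cellNorm, Real.conjExponent, one_div_div]
  simp only [abs_dualityMap hr.ne', ← Real.rpow_mul (abs_nonneg _), mul_div_cancel₀ r hr₁]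

lemma sum_mul_dualityMap_le (hw : ∀ K, 0 ≤ w K) {r : ℝ} (hr : 1 < r) (v b : ι → ℝ) :
    ∑ K, w K * (v K * dualityMap r (b K)) ≤ cellNorm w r v * cellNorm w r b ^ (r - 1) := by
  rw [← cellNorm_conjExponent_dualityMap hw hr b]
  exact sum_mul_mul_le_cellNorm_mul_cellNorm hw (.conjExponent hr) v _

lemma cellNorm_le_mul_cellNorm (hw : ∀ K, 0 ≤ w K) {r q : ℝ} (hr : 0 < r) (hrq : r ≤ q)
    (v : ι → ℝ) : cellNorm w r v ≤ (∑ K, w K) ^ (1 / r - 1 / q) * cellNorm w q v := by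
  have hW : 0 ≤ ∑ K, w K := sum_nonneg fun K _ ↦ hw K
  have hsum := sum_mul_abs_rpow_nonneg hw q v
  have hpow (K : ι) : (|v K| ^ r) ^ (q / r) = |v K| ^ q := by
    rw [← Real.rpow_mul (abs_nonneg _), mul_div_cancel₀ q hr.ne']
  have hjensen := Real.inner_le_weight_mul_Lp_of_nonneg univ ((one_le_div hr).2 hrq) w
    (fun K ↦ |v K| ^ r) hw fun K ↦ Real.rpow_nonneg (abs_nonneg _) r
  simp only [hpow] at hjensen
  calc cellNorm w r v
    _ ≤ ((∑ K, w K) ^ (1 - (q / r)⁻¹) * (∑ K, w K * |v K| ^ q) ^ (q / r)⁻¹) ^ (1 / r) :=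
      Real.rpow_le_rpow (sum_mul_abs_rpow_nonneg hw r v) hjensen (one_div_nonneg.2 hr.le)
    _ = (∑ K, w K) ^ (1 / r - 1 / q) * cellNorm w q v := by
      rw [Real.mul_rpow (by positivity) (by positivity), ← Real.rpow_mul hW,
        ← Real.rpow_mul hsum, cellNorm]
      congr 2 <;> field_simp

lemma sum_mul_powBregman (hw : ∀ K, 0 ≤ w K) {r : ℝ} (hr : r ≠ 0) (a b : ι → ℝ) :
    ∑ K, w K * powBregman r (a K) (b K) = cellNorm w r a ^ r - cellNorm w r b ^ r +
      r * ∑ K, w K * ((b K - a K) * dualityMap r (b K)) := by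
  rw [cellNorm_rpow_self hw hr, cellNorm_rpow_self hw hr, mul_sum, ← sum_sub_distrib,
    ← sum_add_distrib]
  exact sum_congr rfl fun K _ ↦ by rw [powBregman]; ring

end CellNorm

section UpwindStep

variable {ι : Type*} [Fintype ι] [DecidableEq ι] {vol : ι → ℝ} {edge u : ι → ι → ℝ}

/-- The net outflow `|K| (div u)_K` of the fluxes `u` from the cell `K`. -/
def netOutflow (edge u : ι → ι → ℝ) (K : ι) : ℝ := ∑ L ∈ univ.erase K, edge K L * u K L

/-- The amount of `b` leaving the cell `K` per unit of time under the upwind discretization: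
outflow carries the value of `b` at `K` and inflow from `L` that at `L`. -/
def upwindOutflow (edge u : ι → ι → ℝ) (b : ι → ℝ) (K : ι) : ℝ :=
  ∑ L ∈ univ.erase K, edge K L * (max (u K L) 0 * b K - max (-u K L) 0 * b L)

/-- One step of the implicit upwind scheme with time step `δ` and source `f`, from `a` to `b`. -/
def IsUpwindStep (vol : ι → ℝ) (edge u : ι → ι → ℝ) (δ : ℝ) (a f b : ι → ℝ) : Prop :=
  ∀ K, (b K - a K) / δ + ∑ L ∈ univ.erase K, edge K L / vol K *
    (max (u K L) 0 * b K - max (-u K L) 0 * b L) = f K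

/-- The `ℓ^r` energy inequality for a step from `a` to `b` with time step `δ` and source `f`, where
`lam` bounds the growth due to compression; it isolates what the weak BV estimate needs from the
spatial discretization. -/
def EnergyInequality (vol : ι → ℝ) (r δ lam : ℝ) (a f b : ι → ℝ) : Prop :=
  r * ∑ K, vol K * ((b K - a K) * dualityMap r (b K)) ≤
    (r - 1) * lam * cellNorm vol r b ^ r + r * (δ * cellNorm vol r f * cellNorm vol r b ^ (r - 1))

lemma sum_inflow_mul_sub (hsymm : ∀ K L, edge K L = edge L K) (hanti : ∀ K L, u K L = -u L K)
    (g : ι → ℝ) :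
    ∑ K, ∑ L ∈ univ.erase K, edge K L * max (-u K L) 0 * (g K - g L) =
      -∑ K, netOutflow edge u K * g K := by
  have hswap : ∑ K, ∑ L ∈ univ.erase K, edge K L * max (-u K L) 0 * g L =
      ∑ K, ∑ L ∈ univ.erase K, edge K L * max (u K L) 0 * g K := by
    rw [sum_comm' (t' := univ) (s' := fun L ↦ univ.erase L) (by simp [eq_comm])]
    refine sum_congr rfl fun K _ ↦ sum_congr rfl fun L _ ↦ ?_
    rw [hsymm L K, ← hanti K L]
  simp only [mul_sub, sum_sub_distrib, hswap, netOutflow, sum_mul]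
  simp only [← sum_sub_distrib, ← sum_neg_distrib]
  refine sum_congr rfl fun K _ ↦ sum_congr rfl fun L _ ↦ ?_
  linear_combination -(edge K L * g K) * max_zero_sub_max_neg_zero_eq_self (u K L)

lemma sub_one_mul_sum_netOutflow_mul_le (hsymm : ∀ K L, edge K L = edge L K)
    (hnonneg : ∀ K L, 0 ≤ edge K L) (hanti : ∀ K L, u K L = -u L K) {r : ℝ} (hr : 1 < r)
    (b : ι → ℝ) :
    (r - 1) * ∑ K, netOutflow edge u K * |b K| ^ r ≤
      r * ∑ K, dualityMap r (b K) * upwindOutflow edge u b K := by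
  have hcell (K L : ι) : r * (edge K L * u K L * |b K| ^ r) +
      edge K L * max (-u K L) 0 * (|b K| ^ r - |b L| ^ r) ≤
      r * (dualityMap r (b K) * (edge K L * (max (u K L) 0 * b K - max (-u K L) 0 * b L))) := by
    have hinflow : 0 ≤ edge K L * max (-u K L) 0 := mul_nonneg (hnonneg K L) (le_max_right _ _)
    have hconvex := mul_nonneg hinflow (powBregman_nonneg hr (b L) (b K))
    have hdual := mul_dualityMap (zero_lt_one.trans hr).ne' (b K)
    have hsplit := max_zero_sub_max_neg_zero_eq_self (u K L)
    rw [powBregman] at hconvex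
    linear_combination hconvex - edge K L * r * dualityMap r (b K) * b K * hsplit -
      r * (edge K L * u K L) * hdual
  have hsum := sum_le_sum fun K (_ : K ∈ univ) ↦ sum_le_sum fun L (_ : L ∈ univ.erase K) ↦ hcell K L
  simp only [sum_add_distrib, ← mul_sum, ← sum_mul, sum_inflow_mul_sub hsymm hanti] at hsum
  change r * ∑ K, netOutflow edge u K * |b K| ^ r + _ ≤ _ at hsum
  simp only [upwindOutflow]
  linarith

lemma IsUpwindStep.mul_sub_eq (hvol : ∀ K, 0 < vol K) {δ : ℝ} (hδ : 0 < δ) {a f b : ι → ℝ}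
    (h : IsUpwindStep vol edge u δ a f b) (K : ι) :
    vol K * (b K - a K) = δ * (vol K * f K - upwindOutflow edge u b K) := by
  have hK := (hvol K).ne'
  simp only [← h K, div_mul_eq_mul_div, ← sum_div]
  change _ = δ * (vol K * ((b K - a K) / δ + upwindOutflow edge u b K / vol K) - _)
  field_simp
  ring

theorem IsUpwindStep.energyInequality (hvol : ∀ K, 0 < vol K) (hsymm : ∀ K L, edge K L = edge L K)
    (hnonneg : ∀ K L, 0 ≤ edge K L) (hanti : ∀ K L, u K L = -u L K) {δ : ℝ} (hδ : 0 < δ)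
    {a f b : ι → ℝ} (h : IsUpwindStep vol edge u δ a f b) {lam : ℝ}
    (hlam : ∀ K, -(δ * (netOutflow edge u K / vol K)) ≤ lam) {r : ℝ} (hr : 1 < r) :
    EnergyInequality vol r δ lam a f b := by
  have hr₀ : 0 < r := zero_lt_one.trans hr
  have hvol₀ (K : ι) : 0 ≤ vol K := (hvol K).le
  have htest : ∑ K, vol K * ((b K - a K) * dualityMap r (b K)) =
      δ * ∑ K, vol K * (f K * dualityMap r (b K)) -
        δ * ∑ K, dualityMap r (b K) * upwindOutflow edge u b K := by
    simp only [mul_sum, ← sum_sub_distrib]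
    exact sum_congr rfl fun K _ ↦ by
      linear_combination dualityMap r (b K) * h.mul_sub_eq hvol hδ K
  have hcompression : -(δ * ∑ K, netOutflow edge u K * |b K| ^ r) ≤
      lam * cellNorm vol r b ^ r := by
    rw [cellNorm_rpow_self hvol₀ hr₀.ne', mul_sum, mul_sum, ← sum_neg_distrib]
    refine sum_le_sum fun K _ ↦ ?_
    have hvolb : 0 ≤ vol K * |b K| ^ r := mul_nonneg (hvol₀ K) (by positivity)
    refine le_of_eq_of_le ?_ (mul_le_mul_of_nonneg_right (hlam K) hvolb)
    have hK := (hvol K).ne'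
    field_simp
  have htransport := mul_le_mul_of_nonneg_left
    (sub_one_mul_sum_netOutflow_mul_le hsymm hnonneg hanti hr b) hδ.le
  have hsource := mul_le_mul_of_nonneg_left (sum_mul_dualityMap_le hvol₀ hr f b)
    (mul_pos hr₀ hδ).le
  have hcompression' := mul_le_mul_of_nonneg_left hcompression (sub_pos.2 hr).le
  rw [EnergyInequality, htest]
  linarith

end UpwindStep

section EnergyInequality

variable {ι : Type*} [Fintype ι] {w : ι → ℝ} {r κ δ : ℝ}

lemma le_one_add_mul_of_one_sub_mul_le {t x A : ℝ} (hκ : 0 < κ) (ht₀ : 0 ≤ t)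
    (ht : t ≤ (κ - 1) / κ) (hx : 0 ≤ x) (h : (1 - t) * x ≤ A) : x ≤ (1 + κ * t) * A := by
  have hκt : 0 ≤ κ - 1 - κ * t := by linarith [(le_div_iff₀ hκ).1 ht]
  calc x
    _ ≤ (1 + t * (κ - 1 - κ * t)) * x :=
      le_mul_of_one_le_left hx (le_add_of_nonneg_right (mul_nonneg ht₀ hκt))
    _ = (1 + κ * t) * ((1 - t) * x) := by ring
    _ ≤ (1 + κ * t) * A := by gcongr

lemma EnergyInequality.one_sub_mul_cellNorm_le (hw : ∀ K, 0 ≤ w K) (hr : 1 < r) (hδ : 0 ≤ δ)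
    {lam : ℝ} {a f b : ι → ℝ} (h : EnergyInequality w r δ lam a f b) :
    (1 - (r - 1) / r * lam) * cellNorm w r b ≤ cellNorm w r a + δ * cellNorm w r f := by
  have hr₀ : 0 < r := zero_lt_one.trans hr
  rcases (cellNorm_nonneg hw r b).eq_or_lt' with hb | hb
  · rw [hb, mul_zero]
    exact add_nonneg (cellNorm_nonneg hw r a) (mul_nonneg hδ (cellNorm_nonneg hw r f))
  have hsplit : ∑ K, w K * ((b K - a K) * dualityMap r (b K)) =
      cellNorm w r b ^ r - ∑ K, w K * (a K * dualityMap r (b K)) := by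
    rw [cellNorm_rpow_self hw hr₀.ne', ← sum_sub_distrib]
    exact sum_congr rfl fun K _ ↦ by rw [sub_mul, mul_dualityMap hr₀.ne', mul_sub]
  have hholder := mul_le_mul_of_nonneg_left (sum_mul_dualityMap_le hw hr a b) hr₀.le
  have hpow : cellNorm w r b ^ r = cellNorm w r b ^ (r - 1) * cellNorm w r b := by
    rw [← Real.rpow_add_one hb.ne', sub_add_cancel]
  refine le_of_mul_le_mul_left ?_ (mul_pos hr₀ (Real.rpow_pos_of_pos hb (r - 1)))
  rw [EnergyInequality, hsplit, hpow] at h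
  have hcancel : r * ((r - 1) / r * lam) = (r - 1) * lam := by field_simp
  linear_combination h + hholder - cellNorm w r b ^ (r - 1) * cellNorm w r b * hcancel

lemma EnergyInequality.cellNorm_le (hw : ∀ K, 0 ≤ w K) (hr : 1 < r) (hκ : 0 < κ) (hδ : 0 ≤ δ)
    {lam : ℝ} (hlam : 0 ≤ lam) (hcond : (r - 1) / r * lam ≤ (κ - 1) / κ) {a f b : ι → ℝ}
    (h : EnergyInequality w r δ lam a f b) :
    cellNorm w r b ≤ (1 + κ * lam) * cellNorm w r a + κ * (δ * cellNorm w r f) := by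
  have hr₀ : 0 < r := zero_lt_one.trans hr
  have ht : (r - 1) / r * lam ≤ lam :=
    mul_le_of_le_one_left hlam ((div_le_one hr₀).2 (sub_le_self r zero_le_one))
  have ht₀ : 0 ≤ (r - 1) / r * lam := mul_nonneg (div_nonneg (sub_pos.2 hr).le hr₀.le) hlam
  have hκt : 1 + κ * ((r - 1) / r * lam) ≤ κ := by linarith [(le_div_iff₀ hκ).1 hcond]
  have ha := cellNorm_nonneg hw r a
  have hf := mul_nonneg hδ (cellNorm_nonneg hw r f)
  refine (le_one_add_mul_of_one_sub_mul_le hκ ht₀ hcond (cellNorm_nonneg hw r b)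
    (h.one_sub_mul_cellNorm_le hw hr hδ)).trans ?_
  rw [mul_add]
  gcongr

variable {N : ℕ} {ρ f : ℕ → ι → ℝ} {lam : ℕ → ℝ}

lemma cellNorm_le_of_energyInequality (hw : ∀ K, 0 ≤ w K) (hr : 1 < r) (hκ : 0 < κ) (hδ : 0 ≤ δ)
    (hlam : ∀ n, 0 ≤ lam n) (hcond : ∀ n < N, (r - 1) / r * lam n ≤ (κ - 1) / κ)
    (hE : ∀ n < N, EnergyInequality w r δ (lam n) (ρ n) (f n) (ρ (n + 1))) {n : ℕ} (hn : n ≤ N) :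
    cellNorm w r (ρ n) ≤ Real.exp (∑ k ∈ range N, lam k) ^ κ *
      (cellNorm w r (ρ 0) + κ * ∑ k ∈ range N, δ * cellNorm w r (f k)) := by
  have hsource (k : ℕ) : 0 ≤ κ * (δ * cellNorm w r (f k)) :=
    mul_nonneg hκ.le (mul_nonneg hδ (cellNorm_nonneg hw r _))
  -- The sequence is made constant from time `n` on, so that the recursion holds at all times.
  have hstep (k : ℕ) : cellNorm w r (ρ (min (k + 1) n)) ≤
      (1 + κ * lam k) * cellNorm w r (ρ (min k n)) + κ * (δ * cellNorm w r (f k)) := by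
    rcases lt_or_ge k n with hk | hk
    · rw [min_eq_left hk, min_eq_left hk.le]
      exact (hE k (hk.trans_le hn)).cellNorm_le hw hr hκ hδ (hlam k) (hcond k (hk.trans_le hn))
    · rw [min_eq_right (hk.trans k.le_succ), min_eq_right hk]
      have := mul_nonneg (mul_nonneg hκ.le (hlam k)) (cellNorm_nonneg hw r (ρ n))
      linarith [hsource k]
  have hgronwall := discrete_gronwall (u := fun k ↦ cellNorm w r (ρ (min k n)))
    (cellNorm_nonneg hw r _) (fun k _ ↦ hstep k) (fun k _ ↦ mul_nonneg hκ.le (hlam k))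
    (fun k _ ↦ hsource k) N.zero_le
  rw [mul_comm, ← Real.exp_mul, mul_comm _ κ, mul_sum, mul_sum]
  rwa [min_eq_right hn, Nat.zero_min, Nat.Ico_zero_eq_range] at hgronwall

lemma sum_sum_powBregman_le (hw : ∀ K, 0 ≤ w K) (hr : 1 < r) (hδ : 0 ≤ δ)
    (hlam : ∀ n, 0 ≤ lam n)
    (hE : ∀ n < N, EnergyInequality w r δ (lam n) (ρ n) (f n) (ρ (n + 1))) {M : ℝ}
    (hM : ∀ n ≤ N, cellNorm w r (ρ n) ≤ M)
    (hf : ∑ n ∈ range N, δ * cellNorm w r (f n) ≤ M) :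
    ∑ n ∈ range N, ∑ K, w K * powBregman r (ρ n K) (ρ (n + 1) K) ≤
      (1 + r + (r - 1) * ∑ n ∈ range N, lam n) * M ^ r := by
  have hr₀ : 0 < r := zero_lt_one.trans hr
  have : 0 < r - 1 := sub_pos.2 hr
  have hnorm (n : ℕ) : 0 ≤ cellNorm w r (ρ n) := cellNorm_nonneg hw r _
  have hM₀ : 0 ≤ M := (hnorm 0).trans (hM 0 N.zero_le)
  have hstep (n : ℕ) (hn : n ∈ range N) : ∑ K, w K * powBregman r (ρ n K) (ρ (n + 1) K) ≤
      (cellNorm w r (ρ n) ^ r - cellNorm w r (ρ (n + 1)) ^ r) +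
        ((r - 1) * lam n * M ^ r + r * (δ * cellNorm w r (f n) * M ^ (r - 1))) := by
    have hn' := mem_range.1 hn
    rw [sum_mul_powBregman hw hr₀.ne']
    gcongr
    refine (hE n hn').trans ?_
    have := hM (n + 1) hn'
    have := hnorm (n + 1)
    have := hlam n
    have := mul_nonneg hδ (cellNorm_nonneg hw r (f n))
    gcongr
  have hinit : cellNorm w r (ρ 0) ^ r ≤ M ^ r :=
    Real.rpow_le_rpow (hnorm 0) (hM 0 N.zero_le) hr₀.le
  have hfinal : 0 ≤ cellNorm w r (ρ N) ^ r := Real.rpow_nonneg (hnorm N) r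
  have hsource : (∑ n ∈ range N, δ * cellNorm w r (f n)) * M ^ (r - 1) ≤ M ^ r := by
    calc _ ≤ M * M ^ (r - 1) := by gcongr
      _ = M ^ r := by
        rw [← Real.rpow_one_add' hM₀ (by linarith), add_sub_cancel]
  refine (sum_le_sum hstep).trans ?_
  rw [sum_add_distrib, sum_range_sub', sum_add_distrib, ← sum_mul, ← mul_sum, ← mul_sum, ← sum_mul]
  linarith [mul_le_mul_of_nonneg_left hsource hr₀.le]

lemma sq_sum_sum_abs_sub_le (hw : ∀ K, 0 ≤ w K) (hr₁ : 1 < r) (hr₂ : r ≤ 2) {M : ℝ}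
    (hM : ∀ n ≤ N, cellNorm w r (ρ n) ≤ M) :
    (∑ n ∈ range N, ∑ K, w K * |ρ (n + 1) K - ρ n K|) ^ 2 ≤
      (N * (∑ K, w K + 2 * M ^ r)) *
        ((∑ n ∈ range N, ∑ K, w K * powBregman r (ρ n K) (ρ (n + 1) K)) / (r * (r - 1) / 2)) := by
  have hr₀ : 0 < r := zero_lt_one.trans hr₁
  have hc : 0 < r * (r - 1) / 2 := half_pos (mul_pos hr₀ (sub_pos.2 hr₁))
  have hcauchy := sum_sq_le_sum_mul_sum_of_sq_le_mul (range N ×ˢ (univ : Finset ι))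
    (r := fun p ↦ w p.2 * |ρ (p.1 + 1) p.2 - ρ p.1 p.2|)
    (f := fun p ↦ w p.2 * (1 + |ρ p.1 p.2| ^ r + |ρ (p.1 + 1) p.2| ^ r))
    (g := fun p ↦ w p.2 * powBregman r (ρ p.1 p.2) (ρ (p.1 + 1) p.2) / (r * (r - 1) / 2))
    (fun p _ ↦ mul_nonneg (hw _) (by positivity))
    (fun p _ ↦ div_nonneg (mul_nonneg (hw _) (powBregman_nonneg hr₁ _ _)) hc.le)
    (fun p _ ↦ by
      rw [mul_pow, sq_abs, sub_sq_comm, ← mul_div_assoc, le_div_iff₀ hc]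
      linear_combination w p.2 ^ 2 *
        mul_sq_sub_le_mul_powBregman hr₁ hr₂ (ρ p.1 p.2) (ρ (p.1 + 1) p.2))
  simp only [sum_product, ← sum_div] at hcauchy
  have hpow (n : ℕ) (hn : n ≤ N) : ∑ K, w K * |ρ n K| ^ r ≤ M ^ r := by
    rw [← cellNorm_rpow_self hw hr₀.ne']
    exact Real.rpow_le_rpow (cellNorm_nonneg hw r _) (hM n hn) hr₀.le
  have hweight : ∑ n ∈ range N, ∑ K, w K * (1 + |ρ n K| ^ r + |ρ (n + 1) K| ^ r) ≤
      N * (∑ K, w K + 2 * M ^ r) := by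
    rw [← nsmul_eq_mul]
    refine (sum_le_card_nsmul _ _ (∑ K, w K + 2 * M ^ r) fun n hn ↦ ?_).trans_eq
      (by rw [card_range])
    have hn' := mem_range.1 hn
    simp only [mul_add, mul_one, sum_add_distrib]
    linarith [hpow n hn'.le, hpow (n + 1) hn']
  refine hcauchy.trans (mul_le_mul_of_nonneg_right hweight (div_nonneg ?_ hc.le))
  exact sum_nonneg fun n _ ↦ sum_nonneg fun K _ ↦
    mul_nonneg (hw K) (powBregman_nonneg hr₁ _ _)

/-- The constant of the weak BV estimate in terms of `Λ`, the total volume `V`, `x = ‖ρ⁰‖_{ℓ^q}` and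
`y = ∑ₙ δ‖fⁿ‖_{ℓ^q}`. Here `M` bounds `‖ρⁿ‖_{ℓ^r}` for all `n`, and `log Λ` is `∑ₙ λⁿ`. -/
noncomputable def weakBVConst (q κ Λ V x y : ℝ) : ℝ :=
  let r := min q 2
  let M := V ^ (1 / r - 1 / q) * (Λ ^ κ * (x + κ * y))
  √((V + 2 * M ^ r) * ((1 + r + (r - 1) * Real.log Λ) * M ^ r / (r * (r - 1) / 2)))

lemma sum_mul_cellNorm_le_mul_sum (hw : ∀ K, 0 ≤ w K) {q : ℝ} (hr : 0 < r) (hrq : r ≤ q)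
    (hδ : 0 ≤ δ) :
    ∑ n ∈ range N, δ * cellNorm w r (f n) ≤
      (∑ K, w K) ^ (1 / r - 1 / q) * ∑ n ∈ range N, δ * cellNorm w q (f n) := by
  rw [mul_sum]
  refine sum_le_sum fun n _ ↦ ?_
  rw [mul_left_comm]
  exact mul_le_mul_of_nonneg_left (cellNorm_le_mul_cellNorm hw hr hrq _) hδ

theorem sum_sum_abs_sub_le_of_energyInequality {q : ℝ} (hw : ∀ K, 0 ≤ w K) (hq : 1 < q)
    (hκ : 1 < κ) (hδ : 0 ≤ δ) (hlam : ∀ n, 0 ≤ lam n)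
    (hcond : ∀ n < N, (q - 1) / q * lam n ≤ (κ - 1) / κ)
    (hE : ∀ r, 1 < r → ∀ n < N, EnergyInequality w r δ (lam n) (ρ n) (f n) (ρ (n + 1))) :
    ∑ n ∈ range N, ∑ K, w K * |ρ (n + 1) K - ρ n K| ≤
      weakBVConst q κ (Real.exp (∑ n ∈ range N, lam n)) (∑ K, w K) (cellNorm w q (ρ 0))
        (∑ n ∈ range N, δ * cellNorm w q (f n)) * √N := by
  rw [weakBVConst, Real.log_exp]
  set r := min q 2
  set Λ := Real.exp (∑ n ∈ range N, lam n)
  set V := ∑ K, w K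
  set x := cellNorm w q (ρ 0)
  set y := ∑ n ∈ range N, δ * cellNorm w q (f n)
  set M := V ^ (1 / r - 1 / q) * (Λ ^ κ * (x + κ * y))
  have hr₁ : 1 < r := lt_min hq one_lt_two
  have hr₀ : 0 < r := zero_lt_one.trans hr₁
  have hκ₀ : 0 < κ := zero_lt_one.trans hκ
  have hV : 0 ≤ V := sum_nonneg fun K _ ↦ hw K
  have hM (n : ℕ) (hn : n ≤ N) : cellNorm w r (ρ n) ≤ M :=
    (cellNorm_le_mul_cellNorm hw hr₀ (min_le_left q 2) (ρ n)).trans <| mul_le_mul_of_nonneg_left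
      (cellNorm_le_of_energyInequality hw hq hκ₀ hδ hlam hcond (hE q hq) hn)
      (Real.rpow_nonneg hV _)
  have hy : y ≤ Λ ^ κ * (x + κ * y) := by
    have hx₀ : 0 ≤ x := cellNorm_nonneg hw q _
    have hy₀ : 0 ≤ y := sum_nonneg fun n _ ↦ mul_nonneg hδ (cellNorm_nonneg hw q _)
    have hΛ : 1 ≤ Λ ^ κ :=
      Real.one_le_rpow (Real.one_le_exp (sum_nonneg fun n _ ↦ hlam n)) hκ₀.le
    calc y ≤ κ * y := le_mul_of_one_le_left hy₀ hκ.le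
      _ ≤ x + κ * y := le_add_of_nonneg_left hx₀
      _ ≤ Λ ^ κ * (x + κ * y) := le_mul_of_one_le_left (by positivity) hΛ
  have hf : ∑ n ∈ range N, δ * cellNorm w r (f n) ≤ M :=
    (sum_mul_cellNorm_le_mul_sum hw hr₀ (min_le_left q 2) hδ).trans <|
      mul_le_mul_of_nonneg_left hy (Real.rpow_nonneg hV _)
  have hM₀ : 0 ≤ M := (cellNorm_nonneg hw r _).trans (hM 0 N.zero_le)
  have hbregman := sum_sum_powBregman_le hw hr₁ hδ hlam (hE r hr₁) hM hf
  have : 0 < r * (r - 1) := mul_pos hr₀ (sub_pos.2 hr₁)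
  rw [mul_comm, ← Real.sqrt_mul N.cast_nonneg, ← mul_assoc]
  refine Real.le_sqrt_of_sq_le ((sq_sum_sum_abs_sub_le hw hr₁ (min_le_right q 2) hM).trans ?_)
  gcongr

end EnergyInequality

theorem upwind_temporal_weak_BV_general {ι : Type*} [Fintype ι] [DecidableEq ι] {q κ δ : ℝ}
    (hq : 1 < q) (hκ : 1 < κ) (hδ : 0 < δ) {vol : ι → ℝ} (hvol : ∀ K, 0 < vol K)
    {edge : ι → ι → ℝ} (hsymm : ∀ K L, edge K L = edge L K) (hnonneg : ∀ K L, 0 ≤ edge K L)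
    {u : ℕ → ι → ι → ℝ} (hanti : ∀ n K L, u n K L = -u n L K) {N : ℕ} {ρ f : ℕ → ι → ℝ}
    (hstep : ∀ n < N, IsUpwindStep vol edge (u n) δ (ρ n) (f n) (ρ (n + 1))) {lam : ℕ → ℝ}
    (hlam : ∀ n K, δ * max (-(netOutflow edge (u n) K / vol K)) 0 ≤ lam n)
    (hcond : ∀ n < N, (q - 1) / q * lam n ≤ (κ - 1) / κ) :
    ∑ n ∈ range N, ∑ K, vol K * |ρ (n + 1) K - ρ n K| ≤
      weakBVConst q κ (Real.exp (∑ n ∈ range N, lam n)) (∑ K, vol K) (cellNorm vol q (ρ 0))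
        (∑ n ∈ range N, δ * cellNorm vol q (f n)) * √(N * δ / δ) := by
  rcases isEmpty_or_nonempty ι with _ | ⟨⟨K₀⟩⟩
  · rw [sum_eq_zero fun n _ ↦ Fintype.sum_empty _]
    exact mul_nonneg (Real.sqrt_nonneg _) (Real.sqrt_nonneg _)
  have hlam₀ (n : ℕ) : 0 ≤ lam n := (mul_nonneg hδ.le (le_max_right _ _)).trans (hlam n K₀)
  have hcompression (n : ℕ) (K : ι) : -(δ * (netOutflow edge (u n) K / vol K)) ≤ lam n := by
    rw [← mul_neg]
    exact (mul_le_mul_of_nonneg_left (le_max_left _ _) hδ.le).trans (hlam n K)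
  rw [mul_div_cancel_right₀ _ hδ.ne']
  exact sum_sum_abs_sub_le_of_energyInequality (fun K ↦ (hvol K).le) hq hκ hδ.le hlam₀ hcond
    fun r hr n hn ↦ (hstep n hn).energyInequality hvol hsymm hnonneg (hanti n) hδ
      (hcompression n) hr

/-- **Temporal weak BV estimate for the implicit upwind scheme.**
For `q ∈ (1,∞)` and `κ > 1` there is a constant `C` — a function of `Λ`, `∑_K |K|`,
`‖ρ⁰‖_{ℓ^q}` and `∑ₙ δ‖fⁿ‖_{ℓ^q}` only — such that, in any discrete upwind setting
with `N` time steps, time step `δ > 0`, `λⁿ := δ · max_K ((div uⁿ)_K)⁻`,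
`((q−1)/q) λⁿ ≤ (κ−1)/κ` for all `n < N`, and arbitrary data `ρ⁰, f⁰, …, f^{N−1}`,
one has `∑ₙ ∑_K |K| |ρⁿ⁺¹_K − ρⁿ_K| ≤ C · √(T/δ)` with `T := N δ`. -/
theorem upwind_temporal_weak_BV (q κ : ℝ) (hq : 1 < q) (hκ : 1 < κ) :
    ∃ C : ℝ → ℝ → ℝ → ℝ → ℝ,
      ∀ (ι : Type) [Fintype ι] [Nonempty ι] [DecidableEq ι]
        (vol : ι → ℝ), (∀ K, 0 < vol K) →
      ∀ (edge : ι → ι → ℝ), (∀ K L, edge K L = edge L K) → (∀ K L, 0 ≤ edge K L) →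
      ∀ (u : ℕ → ι → ι → ℝ), (∀ n K L, u n K L = - u n L K) →
        (∀ n K L, edge K L = 0 → u n K L = 0) →
      ∀ (δ : ℝ), 0 < δ →
      ∀ (N : ℕ) (ρ f : ℕ → ι → ℝ),
        (∀ n < N, ∀ K : ι,
          (ρ (n+1) K - ρ n K) / δ +
            ∑ L ∈ univ.erase K, edge K L / vol K *
              (max (u n K L) 0 * ρ (n+1) K - max (-u n K L) 0 * ρ (n+1) L) = f n K) →
      ∀ (lam : ℕ → ℝ),
        (∀ n, lam n = δ * univ.sup' univ_nonempty
          (fun K => max (-((∑ L ∈ univ.erase K, edge K L * u n K L) / vol K)) 0)) →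
        (∀ n < N, (q - 1)/q * lam n ≤ (κ - 1)/κ) →
      ∑ n ∈ Finset.range N, ∑ K, vol K * |ρ (n+1) K - ρ n K| ≤
        C (Real.exp (∑ n ∈ Finset.range N, lam n)) (∑ K, vol K)
            ((∑ K, vol K * |ρ 0 K| ^ q) ^ (1/q))
            (∑ n ∈ Finset.range N, δ * (∑ K, vol K * |f n K| ^ q) ^ (1/q)) *
          Real.sqrt ((N * δ) / δ) := by
  refine ⟨weakBVConst q κ, fun ι _ _ _ vol hvol edge hsymm hnonneg u hanti _ δ hδ N ρ f hstep lam
    hlam hcond ↦ upwind_temporal_weak_BV_general hq hκ hδ hvol hsymm hnonneg hanti hstep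
      (fun n K ↦ ?_) hcond⟩
  rw [hlam n]
  exact mul_le_mul_of_nonneg_left
    (le_sup' (fun K ↦ max (-(netOutflow edge (u n) K / vol K)) 0) (mem_univ K)) hδ.le
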